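/- arXiv:2205.01352 — 2 statements merged into one kernel-verified Lean document; each statement's English description precedes it below -/
import Mathlib

section
/- Let A be a complex unital semisimple Banach *-algebra and W a left separating point of A. If δ : A → A is linear and satisfies δ(W) = Aδ(B)* + B*δ(A) whenever AB* = W, then δ = 0. -/
open Filter Topology

/-- Linearization of a Jordan left derivation. -/
theorem jld_lin {A : Type*} [Ring A] (d : A →+ A) (hd : ∀ x, d (x * x) = 2 * (x * d x))
    (a b : A) : d (a * b + b * a) = 2 * (a * d b) + 2 * (b * d a) := by
  have h := hd (a + b)
  have e : (a + b) * (a + b) = a * a + (a * b + b * a) + b * b := by noncomm_ring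
  rw [e, map_add, map_add, hd, hd, map_add d a b] at h
  have : d (a * b + b * a) = 2 * ((a + b) * (d a + d b)) - 2 * (a * d a) - 2 * (b * d b) := by
    rw [← h]; abel
  rw [this]; noncomm_ring

theorem jld_aba {A : Type*} [Ring A] (h2 : ∀ x : A, 2 * x = 0 → x = 0)
    (d : A →+ A) (hd : ∀ x, d (x * x) = 2 * (x * d x))
    (a b : A) : d (a * b * a) = a * a * d b + 3 * (a * b * d a) - b * a * d a := by
  have h1 := jld_lin d hd a (a * b + b * a)
  have h3 := jld_lin d hd (a * a) b
  have e : a * (a * b + b * a) + (a * b + b * a) * a = (a * a * b + b * (a * a)) + (a * b * a + a * b * a) := by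
    noncomm_ring
  rw [e, map_add, h3, hd, jld_lin d hd a b, map_add] at h1
  rw [← sub_eq_zero]
  apply h2
  have : d (a * b * a) + d (a * b * a) = 2 * (a * (2 * (a * d b) + 2 * (b * d a))) + 2 * ((a * b + b * a) * d a) - (2 * (a * a * d b) + 2 * (b * (2 * (a * d a)))) := by
    rw [← h1]; abel
  rw [mul_sub, two_mul (d _), this]; noncomm_ring

theorem jld_abc {A : Type*} [Ring A] (h2 : ∀ x : A, 2 * x = 0 → x = 0)
    (d : A →+ A) (hd : ∀ x, d (x * x) = 2 * (x * d x))
    (a b c : A) : d (a * b * c + c * b * a) = (a * c + c * a) * d b + 3 * (a * b * d c)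
      + 3 * (c * b * d a) - b * a * d c - b * c * d a := by
  have h := jld_aba h2 d hd (a + c) b
  have e : (a + c) * b * (a + c) = a * b * a + (a * b * c + c * b * a) + c * b * c := by noncomm_ring
  rw [e, map_add, map_add, jld_aba h2 d hd, jld_aba h2 d hd, map_add d a c] at h
  rw [eq_comm, ← sub_eq_zero] at h ⊢
  rw [← h]; noncomm_ring

theorem jld_comm {A : Type*} [Ring A] (h2 : ∀ x : A, 2 * x = 0 → x = 0)
    (d : A →+ A) (hd : ∀ x, d (x * x) = 2 * (x * d x))
    (a b : A) : (a * b - b * a) * d (a * b) =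
      a * (a * b - b * a) * d b + b * (a * b - b * a) * d a := by
  have h := jld_abc h2 d hd a b (a * b)
  have e : a * b * (a * b) + a * b * b * a = (a * b) * (a * b) + a * (b * b) * a := by noncomm_ring
  rw [e, map_add, hd, jld_aba h2 d hd, hd] at h
  rw [← sub_eq_zero] at h ⊢
  rw [← neg_eq_zero, ← h]; noncomm_ring

theorem jld_main {A : Type*} [Ring A] (h2 : ∀ x : A, 2 * x = 0 → x = 0)
    (d : A →+ A) (hd : ∀ x, d (x * x) = 2 * (x * d x))
    (a b : A) : (a * a * b - 2 * (a * b * a) + b * a * a) * d a = 0 := by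
  have h := jld_comm h2 d hd a (a + b)
  have h' := jld_comm h2 d hd a b
  have e1 : a * (a + b) = a * a + a * b := mul_add _ _ _
  have e2 : (a + b) * a = a * a + b * a := add_mul _ _ _
  have e3 : a * a + a * b - (a * a + b * a) = a * b - b * a := by abel
  rw [e1, e2, e3, map_add, map_add, mul_add, h', hd] at h
  apply h2
  rw [← sub_eq_zero] at h
  rw [← neg_eq_zero, ← h]; noncomm_ring

theorem unit_shift {A : Type*} [NormedRing A] [NormedAlgebra ℂ A] [CompleteSpace A]
    (z : A) (n : ℕ) (hn : ‖z‖ < n) : IsUnit ((n : A) + z) := by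
  have hpos : (0 : ℝ) < n := lt_of_le_of_lt (norm_nonneg _) hn
  have hne : (n : ℂ) ≠ 0 := by
    intro h; have : n = 0 := by exact_mod_cast h
    simp [this] at hpos
  have h1 : ‖-((n : ℂ)⁻¹ • z)‖ < 1 := by
    rw [norm_neg, norm_smul, norm_inv, Complex.norm_natCast, inv_mul_lt_iff₀ hpos]; simpa using hn
  have h2 := isUnit_one_sub_of_norm_lt_one h1
  have h3 : IsUnit (algebraMap ℂ A n) := (IsUnit.mk0 _ hne).map _
  have := h3.mul h2
  convert this using 1
  rw [sub_neg_eq_add, mul_add, mul_one, ← Algebra.smul_def, smul_smul, mul_inv_cancel₀ hne, one_smul]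
  simp

theorem jordan_of_inv {A : Type*} [NormedRing A] [NormedAlgebra ℂ A] [CompleteSpace A]
    (d T : A →+ A)
    (h : ∀ x : Aˣ, d (↑x⁻¹ : A) = (↑x⁻¹ : A) * T 1 - (↑x⁻¹ : A) * (↑x⁻¹ : A) * T x) (z : A) :
    d (z * z) = 2 * (z * d z) := by
  have hT2 : ∀ x y : Aˣ, (x : A) + y = 1 → T ((x : A) * x) = 2 * (x * T x) - x * x * T 1 := by
    intro x y hxy
    have hy : (y : A) = 1 - x := by rw [← hxy]; abel
    have hc : (x : A) * y = y * x := by rw [hy]; noncomm_ring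
    have h1 := h (x * y)
    have hcu : x * y = y * x := Units.ext hc
    have e : ((↑(x * y)⁻¹ : A)) = (↑x⁻¹ : A) + (↑y⁻¹ : A) := by
      have : (x * y)⁻¹ = y⁻¹ * x⁻¹ := mul_inv_rev _ _
      rw [this]
      have e1 : (↑x⁻¹ : A) + ↑y⁻¹ = ↑y⁻¹ * ((y : A) + x) * ↑x⁻¹ := by
        rw [mul_add, add_mul]; simp
      rw [e1, add_comm (y : A), hxy]; simp
    have e2 := e
    rw [e] at h1
    rw [map_add, h x, h y, add_mul] at h1
    rw [← e2] at h1
    have h3 : (↑x⁻¹ : A) * (↑x⁻¹ : A) * T x + (↑y⁻¹ : A) * (↑y⁻¹ : A) * T y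
        = (↑(x * y)⁻¹ : A) * (↑(x * y)⁻¹ : A) * T (x * y) := by
      rw [← sub_eq_zero] at h1 ⊢
      rw [← neg_eq_zero, ← h1]; abel
    have h4 := congrArg (fun t => (x : A) * y * (x * y) * t) h3
    simp only [mul_add] at h4
    have k1 : (x : A) * y * (x * y) * ((↑x⁻¹ : A) * (↑x⁻¹ : A) * T x) = y * y * T x := by
      have : x * y * (x * y) * (x⁻¹ * x⁻¹) = y * y := by
        rw [hcu, show y * x * (y * x) * (x⁻¹ * x⁻¹) = y * (x * y) * x⁻¹ by group, hcu]; group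
      rw [← mul_assoc]; congr 1; exact_mod_cast congrArg Units.val this
    have k2 : (x : A) * y * (x * y) * ((↑y⁻¹ : A) * (↑y⁻¹ : A) * T y) = x * x * T y := by
      have : x * y * (x * y) * (y⁻¹ * y⁻¹) = x * x := by
        rw [show x * y * (x * y) * (y⁻¹ * y⁻¹) = x * (y * x) * y⁻¹ by group, ← hcu]; group
      rw [← mul_assoc]; congr 1; exact_mod_cast congrArg Units.val this
    have k3 : (x : A) * y * (x * y) * ((↑(x * y)⁻¹ : A) * (↑(x * y)⁻¹ : A) * T (x * y)) = T (x * y) := by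
      have : x * y * (x * y) * ((x * y)⁻¹ * (x * y)⁻¹) = 1 := by group
      have := congrArg Units.val this
      rw [← mul_assoc]
      conv_rhs => rw [← one_mul (T _)]
      congr 1
    rw [k1, k2, k3, hy] at h4
    have e5 : (x : A) * (1 - x) = x - x * x := by noncomm_ring
    rw [e5, map_sub, map_sub] at h4
    rw [← sub_eq_zero] at h4 ⊢
    rw [← h4]; noncomm_ring
  -- The additive map S
  have hTn : ∀ n : ℕ, T (n : A) = n * T 1 := by
    intro n
    have := map_nsmul T n (1 : A)
    simpa [nsmul_eq_mul] using this
  have h2' : ∀ x : A, 2 * x = 0 → x = 0 := by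
    intro x hx
    have : (2 : ℂ) • x = 0 := by rw [two_smul, ← two_mul]; exact hx
    exact (smul_eq_zero.mp this).resolve_left two_ne_zero
  let S : A →+ A := T - (AddMonoidHom.mulRight (T 1))
  have hS : ∀ z, S z = T z - z * T 1 := fun z => rfl
  have hS2 : ∀ z, S (z * z) = 2 * (z * S z) := by
    intro z
    obtain ⟨n, hn⟩ := exists_nat_gt ‖z‖
    obtain ⟨x, hx⟩ := unit_shift z (n + 1) (by push_cast; linarith)
    obtain ⟨y, hy⟩ := unit_shift z n hn
    have := hT2 x (-y) (by rw [Units.val_neg, hx, hy]; push_cast; abel)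
    rw [hx] at this
    have e : (((n + 1 : ℕ) : A) + z) * (((n + 1 : ℕ) : A) + z) =
      (((n + 1) * (n + 1) : ℕ) : A) + ((n + 1) • (z + z)) + z * z := by
      rw [nsmul_eq_mul]
      have := Nat.cast_commute (n + 1) z
      rw [add_mul, mul_add, mul_add, ← this.eq, Nat.cast_mul, mul_add]; abel
    have hc1 := (Nat.cast_commute (n + 1) z).eq
    have hc2 := (Nat.cast_commute (n + 1) (T 1)).eq
    rw [e, map_add, map_add, map_add, hTn, hTn, map_nsmul, map_add] at this
    rw [hS, hS]
    rw [← sub_eq_zero] at this ⊢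
    rw [← this, nsmul_eq_mul, nsmul_eq_mul, Nat.cast_mul]
    generalize ((n + 1 : ℕ) : A) = N at *
    simp only [two_mul, add_mul, mul_add, mul_sub, mul_assoc]
    simp only [← mul_assoc, ← hc1]
    abel
  have hS1 : S 1 = 0 := by rw [hS]; simp
  have hSinv : ∀ x : Aˣ, S (↑x⁻¹ : A) = d (↑x⁻¹ : A) := by
    intro x
    have := hS2 ((x : A) + ↑x⁻¹)
    have e : ((x : A) + ↑x⁻¹) * ((x : A) + ↑x⁻¹) = x * x + 1 + 1 + (↑x⁻¹ : A) * ↑x⁻¹ := by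
      rw [add_mul, mul_add, mul_add]; simp [add_assoc]
    rw [e, map_add, map_add, map_add, hS1, hS2, hS2, map_add S] at this
    have h0 : (x : A) * S (↑x⁻¹ : A) = - ((↑x⁻¹ : A) * S x) := by
      rw [← add_eq_zero_iff_eq_neg]
      apply h2'
      rw [eq_comm, ← sub_eq_zero] at this
      rw [← this]; noncomm_ring
    have h1 := congrArg (fun t => (↑x⁻¹ : A) * t) h0
    simp only [Units.inv_mul_cancel_left] at h1
    rw [h1, h x, hS]
    simp [mul_sub, mul_assoc]
  have hSd : ∀ z, S z = d z := by
    intro z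
    obtain ⟨n, hn⟩ := exists_nat_gt ‖z‖
    obtain ⟨x, hx⟩ := unit_shift z n hn
    have h1 := hSinv x⁻¹
    have h0 := hSinv 1
    simp only [inv_inv, inv_one, Units.val_one] at h1 h0
    rw [hx, map_add, map_add] at h1
    have e : (n : A) = n • (1 : A) := by simp
    rw [e, map_nsmul, map_nsmul, h0] at h1
    exact add_left_cancel h1
  rw [← hSd, ← hSd]; exact hS2 z

theorem schur_banach {A : Type*} [NormedRing A] [NormedAlgebra ℂ A] [CompleteSpace A]
    (L : Ideal A) [hL : L.IsMaximal] (f : Module.End A (A ⧸ L)) :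
    ∃ c : ℂ, ∀ m, f m = c • m := by
  have : IsSimpleModule A (A ⧸ L) := isSimpleModule_iff_isCoatom.mpr hL.out
  have hcont : ∀ f : Module.End A (A ⧸ L), ∃ C : ℝ, ∀ m, ‖f m‖ ≤ C * ‖m‖ := by
    intro f
    obtain ⟨u, hu⟩ := Submodule.Quotient.mk_surjective L (f (Submodule.Quotient.mk 1))
    refine ⟨‖u‖, fun m => ?_⟩
    have key : ∀ ε : ℝ, 0 < ε → ‖f m‖ ≤ ‖u‖ * (‖m‖ + ε) := by
      intro ε hε
      obtain ⟨x, rfl, hx⟩ := Submodule.Quotient.norm_mk_lt m hε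
      have e : f (Submodule.Quotient.mk x) = Submodule.Quotient.mk (x * u) := by
        have : (Submodule.Quotient.mk x : A ⧸ L) = x • Submodule.Quotient.mk 1 := by
          rw [← Submodule.Quotient.mk_smul]; simp
        rw [this, map_smul, ← hu, ← Submodule.Quotient.mk_smul]; simp
      rw [e]
      calc _ ≤ ‖x * u‖ := Submodule.Quotient.norm_mk_le _ _
        _ ≤ ‖x‖ * ‖u‖ := norm_mul_le _ _
        _ = ‖u‖ * ‖x‖ := mul_comm _ _
        _ ≤ _ := by gcongr
    have ht : Filter.Tendsto (fun ε : ℝ => ‖u‖ * (‖m‖ + ε)) (nhdsWithin 0 (Set.Ioi 0)) (nhds (‖u‖ * (‖m‖ + 0))) := by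
      apply Filter.Tendsto.mono_left _ nhdsWithin_le_nhds
      exact (Continuous.tendsto (by fun_prop) 0)
    rw [add_zero] at ht
    exact ge_of_tendsto ht (Filter.eventually_of_mem self_mem_nhdsWithin fun ε hε => key ε hε)
  have toC : ∀ f : Module.End A (A ⧸ L), ∃ F : (A ⧸ L) →L[ℂ] (A ⧸ L), ∀ m, F m = f m := by
    intro f
    obtain ⟨C, hC⟩ := hcont f
    exact ⟨(f.restrictScalars ℂ).mkContinuous C hC, fun m => rfl⟩
  obtain ⟨F, hF⟩ := toC f
  have : Nontrivial (A ⧸ L) := IsSimpleModule.nontrivial A _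
  obtain ⟨c, hc⟩ := spectrum.nonempty F
  refine ⟨c, ?_⟩
  let cA : Module.End A (A ⧸ L) := 
    { toFun := fun m => c • m
      map_add' := by simp
      map_smul' := fun a m => (smul_comm c a m) }
  let g : Module.End A (A ⧸ L) := cA - f
  have hg : ∀ m, g m = c • m - f m := fun m => rfl
  rcases LinearMap.bijective_or_eq_zero g with hb | h0
  · exfalso
    apply hc
    let e := LinearEquiv.ofBijective g hb
    obtain ⟨G, hG⟩ := toC (e.symm : (A ⧸ L) →ₗ[A] (A ⧸ L))
    have hGe : ∀ m, (algebraMap ℂ ((A ⧸ L) →L[ℂ] (A ⧸ L)) c - F) m = e m := by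
      intro m
      simp [e, hg, hF, Algebra.algebraMap_eq_smul_one]
    refine ⟨⟨algebraMap ℂ _ c - F, G, ?_, ?_⟩, rfl⟩
    · ext m
      rw [mul_apply_eq_comp, hGe, hG]
      simp
    · ext m
      rw [mul_apply_eq_comp, hG, hGe]
      simp
  · intro m
    have := hg m
    rw [h0] at this
    simpa using (sub_eq_zero.mp this.symm).symm

theorem density_banach {A : Type*} [NormedRing A] [NormedAlgebra ℂ A] [CompleteSpace A]
    (L : Ideal A) [hL : L.IsMaximal] {ι : Type*} [Fintype ι] (v w : ι → A ⧸ L)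
    (hv : LinearIndependent ℂ v) : ∃ b : A, ∀ i, b • v i = w i := by
  classical
  have : IsSimpleModule A (A ⧸ L) := isSimpleModule_iff_isCoatom.mpr hL.out
  obtain ⟨B, hB⟩ := LinearMap.exists_leftInverse_of_injective
    (Finsupp.linearCombination ℂ v) (LinearMap.ker_eq_bot.mpr hv)
  obtain ⟨g, hg⟩ : ∃ g : (A ⧸ L) →ₗ[ℂ] (A ⧸ L), ∀ i, g (v i) = w i := by
    refine ⟨(Finsupp.linearCombination ℂ w).comp B, fun i => ?_⟩
    have := LinearMap.congr_fun hB (Finsupp.single i 1)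
    simp at this
    simp [this]
  let G : Module.End (Module.End A (A ⧸ L)) (A ⧸ L) :=
    { toFun := g
      map_add' := map_add g
      map_smul' := fun f m => by
        obtain ⟨c, hc⟩ := schur_banach L f
        simp [hc] }
  obtain ⟨b, hb⟩ := jacobson_density G (Finset.univ.image v)
  refine ⟨b, fun i => ?_⟩
  rw [← hb (v i) (by simp)]
  exact hg i

theorem kill_step1 {A : Type*} [NormedRing A] [NormedAlgebra ℂ A] [CompleteSpace A]
    (L : Ideal A) [hL : L.IsMaximal] (a : A) (v : A ⧸ L) (hv : v ≠ 0)
    (hJ : ∀ b : A, a • a • b • v - (2 : ℂ) • a • b • a • v + b • a • a • v = 0) :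
    ∃ c : ℂ, ∀ m : A ⧸ L, a • a • m - (2 * c) • a • m + (c * c) • m = 0 := by
  by_cases hi : LinearIndependent ℂ ![v, a • v]
  · exfalso
    by_cases h3 : a • a • v ∈ Submodule.span ℂ (Set.range ![v, a • v])
    · rw [Matrix.range_cons_cons_empty, Submodule.mem_span_pair] at h3
      obtain ⟨α, β, h3⟩ := h3
      have key : ∀ w : A ⧸ L, β • w = (2 : ℂ) • a • w := by
        intro w
        obtain ⟨b, hb⟩ := density_banach L ![v, a • v] ![0, w] hi
        have hb0 : b • v = 0 := hb 0
        have hb1 : b • a • v = w := hb 1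
        have := hJ b
        rw [← h3, hb0, hb1, smul_add, smul_comm b α, smul_comm b β, hb0, hb1] at this
        simp only [smul_zero, zero_sub, zero_add] at this
        rw [add_comm, ← sub_eq_add_neg, sub_eq_zero] at this
        exact this
      have h5 := key v
      rw [LinearIndependent.pair_iff] at hi
      have := hi β (-2) (by rw [h5, neg_smul, add_neg_cancel])
      norm_num at this
    · have hi3 : LinearIndependent ℂ ![a • a • v, v, a • v] :=
        linearIndependent_finCons.mpr ⟨hi, h3⟩
      obtain ⟨b, hb⟩ := density_banach L _ ![v, 0, 0] hi3
      have hb0 : b • a • a • v = v := hb 0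
      have hb1 : b • v = 0 := hb 1
      have hb2 : b • a • v = 0 := hb 2
      have := hJ b
      rw [hb0, hb1, hb2] at this
      simp at this
      exact hv this
  · rw [LinearIndependent.pair_iff' hv] at hi
    push Not at hi
    obtain ⟨c, hc⟩ := hi
    refine ⟨c, fun m => ?_⟩
    obtain ⟨b, hb⟩ := density_banach L (fun _ : Unit => v) (fun _ => m)
      (linearIndependent_unique_iff.mpr hv)
    have hb : b • v = m := hb ()
    have := hJ b
    rw [← hc, smul_comm a c v, ← hc, smul_comm b c v, smul_comm b c (c • v), smul_comm b c v, hb, smul_comm a c m] at this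
    rw [← this, mul_smul, mul_smul]

theorem kill_main {A : Type*} [NormedRing A] [NormedAlgebra ℂ A] [CompleteSpace A]
    (L : Ideal A) [hL : L.IsMaximal] (D : A →ₗ[ℂ] (A ⧸ L)) (hD1 : D 1 = 0)
    (hJ : ∀ a b : A, a • a • b • D a - (2 : ℂ) • a • b • a • D a + b • a • a • D a = 0)
    (u₁ u₂ : A ⧸ L) (hu : LinearIndependent ℂ ![u₁, u₂]) (a : A) : D a = 0 := by
  by_contra ha
  obtain ⟨c, hc⟩ := kill_step1 L a (D a) ha (hJ a)
  obtain ⟨n, hn⟩ : ∃ n, n = a - algebraMap ℂ A c := ⟨_, rfl⟩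
  have hDn : D n ≠ 0 := by
    rw [hn, map_sub, Algebra.algebraMap_eq_smul_one, map_smul, hD1]; simpa using ha
  have hnm : ∀ m : A ⧸ L, n • m = a • m - c • m := by
    intro m; rw [hn, sub_smul, algebraMap_smul]
  have hnn : ∀ m : A ⧸ L, n • n • m = 0 := by
    intro m
    rw [hnm m, smul_sub, hnm, hnm, smul_comm a c m, ← hc m, mul_smul, mul_smul, two_smul]
    abel
  obtain ⟨v₁, v₂, t, hv, h1, h2⟩ : ∃ (v₁ v₂ : A ⧸ L) (t : ℂ), LinearIndependent ℂ ![v₁, v₂] ∧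
      n • v₁ = t • v₂ ∧ n • v₂ = 0 := by
    by_cases h : ∀ m : A ⧸ L, n • m = 0
    · exact ⟨u₁, u₂, 0, hu, by rw [h, zero_smul], h _⟩
    · push Not at h
      obtain ⟨m, hm⟩ := h
      refine ⟨m, n • m, 1, ?_, by simp, hnn m⟩
      rw [LinearIndependent.pair_iff]
      intro s t hst
      have h' := congrArg (fun z => n • z) hst
      simp only [smul_add, smul_zero] at h'
      rw [smul_comm n s, smul_comm n t, hnn, smul_zero, add_zero] at h'
      have hs := (smul_eq_zero.mp h').resolve_right hm
      rw [hs, zero_smul, zero_add] at hst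
      exact ⟨hs, (smul_eq_zero.mp hst).resolve_right hm⟩
  obtain ⟨b, hb⟩ := density_banach L _ ![v₁, (2 : ℂ) • v₂] hv
  have hb0 : b • v₁ = v₁ := hb 0
  have hb1 : b • v₂ = (2 : ℂ) • v₂ := hb 1
  obtain ⟨x, s, hx, hx1, hx2⟩ : ∃ (x : A) (s : ℂ), D x ≠ 0 ∧ x • v₁ = v₁ + s • v₂ ∧
      x • v₂ = (2 : ℂ) • v₂ := by
    by_cases h : D b = 0
    · refine ⟨b + n, t, by rw [map_add, h, zero_add]; exact hDn, ?_, ?_⟩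
      · rw [add_smul, hb0, h1]
      · rw [add_smul, hb1, h2, add_zero]
    · exact ⟨b, 0, h, by simpa using hb0, hb1⟩
  obtain ⟨e, he⟩ := kill_step1 L x (D x) hx (hJ x)
  have hv2 : v₂ ≠ 0 := hv.ne_zero 1
  rw [LinearIndependent.pair_iff] at hv
  have e2 := he v₂
  rw [hx2, smul_comm x (2 : ℂ), hx2, smul_smul, smul_smul, ← sub_smul, ← add_smul] at e2
  have e2' := (smul_eq_zero.mp e2).resolve_right hv2
  have e1 := he v₁
  rw [hx1, smul_add, smul_comm x s, hx1, hx2] at e1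
  have := hv (1 - 2 * e + e * e) (s + s * 2 - 2 * e * s) (by
    rw [← e1]; module)
  have h3 : (e - 2) ^ 2 = 0 := by linear_combination e2'
  have h4 : e = 2 := by
    have := pow_eq_zero_iff (two_ne_zero) |>.mp h3
    linear_combination this
  rw [h4] at this
  norm_num at this

theorem jld_central {A : Type*} [NormedRing A] [NormedAlgebra ℂ A] [CompleteSpace A]
    (hss : (⊥ : Ideal A).jacobson = ⊥)
    (d : A →ₗ[ℂ] A) (hd : ∀ x, d (x * x) = 2 * (x * d x)) (a b : A) : d a * b = b * d a := by
  have h2 : ∀ x : A, 2 * x = 0 → x = 0 := by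
    intro x hx
    have : (2 : ℂ) • x = 0 := by rw [two_smul, ← two_mul]; exact hx
    exact (smul_eq_zero.mp this).resolve_left two_ne_zero
  have hd1 : d 1 = 0 := by
    have := hd 1
    rw [one_mul, one_mul, two_mul] at this
    simpa using this
  rw [← sub_eq_zero, ← Submodule.mem_bot A, ← hss, Ideal.jacobson, Ideal.mem_sInf]
  rintro L ⟨-, hL⟩
  have mk_eq : ∀ x : A, (Submodule.Quotient.mk x : A ⧸ L) = x • Submodule.Quotient.mk 1 := by
    intro x; rw [← Submodule.Quotient.mk_smul]; simp
  rw [← Submodule.Quotient.mk_eq_zero, mk_eq, sub_smul, mul_smul, mul_smul, sub_eq_zero]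
  generalize (Submodule.Quotient.mk 1 : A ⧸ L) = m
  by_cases hdep : ∃ u₁ u₂ : A ⧸ L, LinearIndependent ℂ ![u₁, u₂]
  · obtain ⟨u₁, u₂, hu⟩ := hdep
    have hz : ∀ m : A ⧸ L, d a • m = 0 := by
      intro m
      let D : A →ₗ[ℂ] (A ⧸ L) :=
        { toFun := fun x => d x • m
          map_add' := fun x y => by rw [map_add, add_smul]
          map_smul' := fun c x => by rw [map_smul, smul_assoc]; rfl }
      have hDx : ∀ x, D x = d x • m := fun _ => rfl
      refine kill_main L D (by rw [hDx, hd1, zero_smul]) ?_ u₁ u₂ hu a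
      intro x y
      have h := congrArg (fun t => t • m) (jld_main h2 d.toAddMonoidHom hd x y)
      simp only [LinearMap.toAddMonoidHom_coe, zero_smul] at h
      rw [← h, hDx]
      simp only [add_smul, sub_smul, mul_smul, add_mul, sub_mul, two_mul, two_smul, mul_assoc]
    rw [hz, hz, smul_zero]
  · push Not at hdep
    by_cases hm : m = 0
    · simp [hm]
    · have key : ∀ x : A, ∃ c : ℂ, c • m = x • m := by
        intro x
        have := hdep m (x • m)
        rw [LinearIndependent.pair_iff' hm] at this
        push Not at this
        exact this
      obtain ⟨p, hp⟩ := key (d a)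
      obtain ⟨q, hq⟩ := key b
      rw [← hp, ← hq, smul_comm (d a) q, smul_comm b p, ← hp, ← hq, smul_comm]

theorem exists_separating {Z : Type*} [NormedCommRing Z] [NormedAlgebra ℂ Z] [CompleteSpace Z]
    (φ : ℕ → (Z →ₐ[ℂ] ℂ)) (hφ : Function.Injective φ) :
    ∃ x : Z, ∀ m n, m ≠ n → φ m x ≠ φ n x := by
  by_contra hcon
  push Not at hcon
  let ι := {p : ℕ × ℕ // p.1 ≠ p.2}
  let K : ι → Submodule ℂ Z := fun p =>
    LinearMap.ker ((φ p.1.1).toLinearMap - (φ p.1.2).toLinearMap)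
  have hK : ∀ p x, x ∈ K p ↔ φ p.1.1 x = φ p.1.2 x := by
    intro p x; simp [K, sub_eq_zero]
  have hne : Nonempty ι := ⟨⟨(0, 1), by simp⟩⟩
  have hcl : ∀ p, IsClosed (K p : Set Z) := by
    intro p
    have : (K p : Set Z) = {x | φ p.1.1 x = φ p.1.2 x} := by ext x; exact hK p x
    rw [this]
    exact isClosed_eq (AlgHom.toContinuousLinearMap (φ p.1.1)).continuous
      (AlgHom.toContinuousLinearMap (φ p.1.2)).continuous
  have hU : (⋃ p, (K p : Set Z)) = Set.univ := by
    rw [Set.eq_univ_iff_forall]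
    intro x
    obtain ⟨m, n, hmn, h⟩ := hcon x
    exact Set.mem_iUnion.mpr ⟨⟨(m, n), hmn⟩, (hK _ _).mpr h⟩
  obtain ⟨p, hp⟩ := nonempty_interior_of_iUnion_of_closed hcl hU
  have ht := Submodule.eq_top_of_nonempty_interior' (K p) hp
  apply p.2
  apply hφ
  ext x
  exact (hK p x).mp (ht ▸ Submodule.mem_top)

theorem disc_finite {Z : Type*} [NormedCommRing Z] [NormedAlgebra ℂ Z] [CompleteSpace Z]
    (d : Z →ₗ[ℂ] Z) (hd : ∀ x y, d (x * y) = x * d y + y * d x) :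
    {φ : Z →ₐ[ℂ] ℂ | ¬ Continuous (fun x => φ (d x))}.Finite := by
  by_contra hinf
  let emb := Set.Infinite.natEmbedding _ hinf
  let φ : ℕ → (Z →ₐ[ℂ] ℂ) := fun n => (emb n).1
  have hφinj : Function.Injective φ := fun m n h => emb.injective (Subtype.ext h)
  have hdisc : ∀ n, ¬ Continuous (fun x => φ n (d x)) := fun n => (emb n).2
  have hφb : ∀ n x, ‖φ n x‖ ≤ ‖x‖ * ‖(1 : Z)‖ := fun n x =>
    AlgHom.norm_apply_le_self_mul_norm_one (φ n) x
  obtain ⟨x₀, hx₀⟩ := exists_separating φ hφinj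
  let p : ℕ → Z := fun i => x₀ - algebraMap ℂ Z (φ i x₀)
  have hp : ∀ m i, φ m (p i) = φ m x₀ - φ i x₀ := by
    intro m i; simp [p]
  let r : ℕ → ℕ → Z := fun m i => ∏ j ∈ (Finset.range i).erase m, (p j * p j)
  have hr : ∀ m i, m < i → p m * p m * r m i = r i i := by
    intro m i hmi
    have h1 : r i i = ∏ j ∈ Finset.range i, (p j * p j) := by
      simp only [r]; rw [Finset.erase_eq_of_notMem (by simp)]
    rw [h1]
    exact Finset.mul_prod_erase _ (fun j => p j * p j) (Finset.mem_range.mpr hmi)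
  have hq : ∀ m, φ m (r m m) ≠ 0 := by
    intro m
    simp only [r]
    rw [map_prod, Finset.prod_ne_zero_iff]
    intro j hj
    have : m ≠ j := (Finset.ne_of_mem_erase hj).symm
    rw [map_mul, hp]
    have := sub_ne_zero.mpr (hx₀ m j this)
    exact mul_ne_zero this this
  have hDmul : ∀ m x y, φ m (d (x * y)) = φ m x * φ m (d y) + φ m y * φ m (d x) := by
    intro m x y; rw [hd]; simp
  let C : ℕ → ℝ := fun i => 1 + ∑ m ∈ Finset.range (i + 1), ‖r m i‖
  have hC1 : ∀ i, 1 ≤ C i := fun i => by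
    simp only [C]
    have : 0 ≤ ∑ m ∈ Finset.range (i + 1), ‖r m i‖ := Finset.sum_nonneg fun _ _ => norm_nonneg _
    linarith
  have hCr : ∀ m i, m ≤ i → ‖r m i‖ ≤ C i := by
    intro m i hmi
    have := Finset.single_le_sum (f := fun m => ‖r m i‖) (fun _ _ => norm_nonneg _)
      (Finset.mem_range.mpr (Nat.lt_succ_of_le hmi))
    simp only [C]
    linarith
  have hex : ∀ (m : ℕ) (s : Z), ∃ z : Z, C m * ‖z‖ ≤ (1 / 2) ^ m ∧
      (m : ℝ) < ‖φ m (d (s + r m m * z))‖ := by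
    intro m s
    by_contra hno
    push Not at hno
    apply hdisc m
    let D : Z →ₗ[ℂ] ℂ := (φ m).toLinearMap.comp d
    have hDx : ∀ x, D x = φ m (d x) := fun _ => rfl
    have hCpos : 0 < C m := lt_of_lt_of_le one_pos (hC1 m)
    have hrpos : 0 < (1 / 2 : ℝ) ^ m / C m := by positivity
    have hqpos : 0 < ‖φ m (r m m)‖ := norm_pos_iff.mpr (hq m)
    have hb := LinearMap.bound_of_ball_bound' hrpos
      ((m + ‖D s‖ + ‖(1 : Z)‖ * ‖D (r m m)‖) / ‖φ m (r m m)‖) D (by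
        intro z hz
        rw [mem_closedBall_zero_iff, le_div_iff₀ hCpos, mul_comm] at hz
        have h1 := hno z hz
        rw [map_add, map_add, hDmul, ← hDx, ← hDx, ← hDx] at h1
        have hz1 : ‖z‖ ≤ 1 := by
          have a1 : ‖z‖ ≤ C m * ‖z‖ := le_mul_of_one_le_left (norm_nonneg _) (hC1 m)
          have a2 : (1 / 2 : ℝ) ^ m ≤ 1 := pow_le_one₀ (by norm_num) (by norm_num)
          linarith
        have h2 : ‖φ m z‖ ≤ ‖(1 : Z)‖ :=
          (hφb m z).trans (mul_le_of_le_one_left (norm_nonneg _) hz1)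
        rw [le_div_iff₀ hqpos]
        have h3 : ‖D z‖ * ‖φ m (r m m)‖ ≤ ‖D s + (φ m (r m m) * D z + φ m z * D (r m m))‖
            + ‖D s‖ + ‖φ m z * D (r m m)‖ := by
          have e : φ m (r m m) * D z = (D s + (φ m (r m m) * D z + φ m z * D (r m m)))
            - D s - φ m z * D (r m m) := by ring
          rw [mul_comm, ← norm_mul]
          conv_lhs => rw [e]
          exact (norm_sub_le _ _).trans (add_le_add_left (norm_sub_le _ _) _)
        have h4 : ‖φ m z * D (r m m)‖ ≤ ‖(1 : Z)‖ * ‖D (r m m)‖ := by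
          rw [norm_mul]; gcongr
        linarith)
    exact (LinearMap.mkContinuous D _ hb).continuous
  choose f hf1 hf2 using hex
  obtain ⟨s, hs0, hs⟩ : ∃ s : ℕ → Z, s 0 = 0 ∧ ∀ m, s (m + 1) = s m + r m m * f m (s m) :=
    ⟨fun n => Nat.rec 0 (fun m s => s + r m m * f m s) n, rfl, fun m => rfl⟩
  let z : ℕ → Z := fun m => f m (s m)
  have hz : ∀ m i, m ≤ i → ‖r m i * z i‖ ≤ (1 / 2) ^ i := by
    intro m i hmi
    calc _ ≤ ‖r m i‖ * ‖z i‖ := norm_mul_le _ _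
      _ ≤ C i * ‖z i‖ := by gcongr; exact hCr m i hmi
      _ ≤ _ := hf1 i (s i)
  have hgeo : Summable fun i : ℕ => (1 / 2 : ℝ) ^ i := summable_geometric_two
  have hsum : Summable fun i => r i i * z i :=
    Summable.of_norm_bounded hgeo fun i => hz i i le_rfl
  have hps : ∀ m, s m = ∑ i ∈ Finset.range m, r i i * z i := by
    intro m
    induction m with
    | zero => simpa using hs0
    | succ m ih => rw [hs, Finset.sum_range_succ, ← ih]
  obtain ⟨x, hx⟩ : ∃ x, x = ∑' i, r i i * z i := ⟨_, rfl⟩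
  have hxm : ∀ m, ∃ t, x = s (m + 1) + p m * p m * t := by
    intro m
    refine ⟨∑' i, r m (i + (m + 1)) * z (i + (m + 1)), ?_⟩
    have hsm : Summable fun i => r m (i + (m + 1)) * z (i + (m + 1)) := by
      refine Summable.of_norm_bounded ((summable_nat_add_iff (m + 1)).mpr hgeo) fun i => ?_
      exact hz m _ (by omega)
    rw [hx, hps, ← hsm.tsum_mul_left, ← hsum.sum_add_tsum_nat_add (m + 1)]
    congr 1
    apply tsum_congr
    intro i
    rw [← mul_assoc, hr m _ (by omega)]
  have hbig : ∀ m : ℕ, (m : ℝ) < ‖d x‖ * ‖(1 : Z)‖ := by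
    intro m
    obtain ⟨t, ht⟩ := hxm m
    have h0 : φ m (p m) = 0 := by rw [hp, sub_self]
    have e : φ m (d x) = φ m (d (s m + r m m * f m (s m))) := by
      rw [ht, map_add, map_add, hDmul, hDmul, map_mul, h0, hs]; simp
    calc (m : ℝ) < ‖φ m (d (s m + r m m * f m (s m)))‖ := hf2 m (s m)
      _ = ‖φ m (d x)‖ := by rw [e]
      _ ≤ _ := hφb m _
  obtain ⟨n, hn⟩ := exists_nat_gt (‖d x‖ * ‖(1 : Z)‖)
  exact lt_asymm hn (hbig n)

theorem der_continuous {Z : Type*} [NormedCommRing Z] [NormedAlgebra ℂ Z] [CompleteSpace Z]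
    (hss : ∀ z : Z, (∀ φ : Z →ₐ[ℂ] ℂ, φ z = 0) → z = 0)
    (d : Z →ₗ[ℂ] Z) (hd : ∀ x y, d (x * y) = x * d y + y * d x) : Continuous d := by
  have hfin := disc_finite d hd
  apply LinearMap.continuous_of_seq_closed_graph
  intro u x y hu hdu
  rw [← sub_eq_zero]
  have hv : Tendsto (fun n => u n - x) atTop (𝓝 0) := by
    simpa using hu.sub_const x
  have hdv : Tendsto (fun n => d (u n - x)) atTop (𝓝 (y - d x)) := by
    simp only [map_sub]; exact hdu.sub_const (d x)
  generalize y - d x = s at hdv ⊢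
  apply hss
  have hcont : ∀ φ : Z →ₐ[ℂ] ℂ, Continuous (fun x => φ (d x)) → φ s = 0 := by
    intro φ hφ
    have h1 : Tendsto (fun n => φ (d (u n - x))) atTop (𝓝 (φ s)) :=
      ((AlgHom.toContinuousLinearMap φ).continuous.tendsto s).comp hdv
    have h2 : Tendsto (fun n => φ (d (u n - x))) atTop (𝓝 (φ (d 0))) :=
      (hφ.tendsto 0).comp (by simpa using hu.sub_const x)
    rw [map_zero, map_zero] at h2
    exact tendsto_nhds_unique h1 h2
  intro φ
  by_cases hφ : Continuous (fun x => φ (d x))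
  · exact hcont φ hφ
  by_contra hφs
  apply hφ
  classical
  -- an element separating φ from the other bad characters
  obtain ⟨t, ht1, ht0⟩ : ∃ t : Z, φ t = 1 ∧ ∀ ψ ∈ hfin.toFinset.erase φ, ψ t = 0 := by
    have hsep : ∀ ψ : Z →ₐ[ℂ] ℂ, ∃ t : Z, ψ ≠ φ → φ t = 1 ∧ ψ t = 0 := by
      intro ψ
      by_cases h : ψ = φ
      · exact ⟨0, fun h' => absurd h h'⟩
      · have : ∃ w, ψ w ≠ φ w := by
          by_contra hc; push Not at hc; exact h (AlgHom.ext hc)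
        obtain ⟨w, hw⟩ := this
        have hw' : φ w - ψ w ≠ 0 := sub_ne_zero.mpr (Ne.symm hw)
        refine ⟨(φ w - ψ w)⁻¹ • (w - algebraMap ℂ Z (ψ w)), fun _ => ⟨?_, ?_⟩⟩
        · simp [hw']
        · simp
    choose τ hτ using hsep
    refine ⟨∏ ψ ∈ hfin.toFinset.erase φ, τ ψ, ?_, ?_⟩
    · rw [map_prod]
      exact Finset.prod_eq_one fun ψ hψ => (hτ ψ (Finset.ne_of_mem_erase hψ)).1
    · intro ψ hψ
      rw [map_prod]
      exact Finset.prod_eq_zero hψ (hτ ψ (Finset.ne_of_mem_erase hψ)).2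
  obtain ⟨e, he⟩ : ∃ e, e = (φ s)⁻¹ • (t * s) := ⟨_, rfl⟩
  have he1 : φ e = 1 := by rw [he]; simp [ht1, hφs]
  have he0 : ∀ ψ : Z →ₐ[ℂ] ℂ, ψ ≠ φ → ψ e = 0 := by
    intro ψ hψ
    rw [he, map_smul, map_mul]
    by_cases h : Continuous (fun x => ψ (d x))
    · rw [hcont ψ h]; simp
    · rw [ht0 ψ (Finset.mem_erase.mpr ⟨hψ, by simpa using h⟩)]; simp
  have hmul : ∀ x, e * x = φ x • e := by
    intro x
    rw [← sub_eq_zero]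
    apply hss
    intro ψ
    by_cases h : ψ = φ
    · subst h; simp [he1]
    · simp [he0 ψ h]
  have hde : d e = 0 := by
    have hee : e * e = e := by rw [hmul, he1, one_smul]
    have h1 := hd e e
    rw [hee] at h1
    have h2 : e * d e = 0 := by
      have := congrArg (fun t => e * t) h1
      simp only [mul_add, ← mul_assoc, hee] at this
      simpa using this
    rw [h1, h2, add_zero]
  have hz : ∀ x, φ (d x) = 0 := by
    intro x
    have h1 := hd e x
    rw [hmul, map_smul, hde] at h1
    have := congrArg φ h1
    simpa [he1] using this.symm
  simp only [hz]
  exact continuous_const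

theorem der_zero {Z : Type*} [NormedCommRing Z] [NormedAlgebra ℂ Z] [CompleteSpace Z]
    (hss : ∀ z : Z, (∀ φ : Z →ₐ[ℂ] ℂ, φ z = 0) → z = 0)
    (d : Z →ₗ[ℂ] Z) (hd : ∀ x y, d (x * y) = x * d y + y * d x) (x : Z) : d x = 0 := by
  have hcont := der_continuous hss d hd
  apply hss
  intro φ
  have hd1 : d 1 = 0 := by
    have := hd 1 1
    simpa using this
  obtain ⟨a, ha⟩ : ∃ a, a = x - algebraMap ℂ Z (φ x) := ⟨_, rfl⟩
  have hda : d a = d x := by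
    rw [ha, map_sub, Algebra.algebraMap_eq_smul_one, map_smul, hd1]; simp
  have hφa : φ a = 0 := by rw [ha]; simp
  rw [← hda]
  have hpow : ∀ n : ℕ, d (a ^ (n + 1)) = (n + 1 : ℕ) * a ^ n * d a := by
    intro n
    induction n with
    | zero => simp
    | succ n ih => rw [pow_succ, hd, ih]; push_cast; ring
  have hdn : ∀ (n : ℕ) (y : Z), d ((n : Z) * y) = n * d y := by
    intro n y
    rw [← nsmul_eq_mul, map_nsmul, nsmul_eq_mul]
  have key : ∀ k m : ℕ, ∃ c : Z, (d ^ k) (a ^ (m + k)) =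
      ((m + k).descFactorial k : ℕ) * a ^ m * d a ^ k + a ^ (m + 1) * c := by
    intro k
    induction k with
    | zero => intro m; exact ⟨0, by simp⟩
    | succ k ih =>
      intro m
      obtain ⟨c, hc⟩ := ih (m + 1)
      have e : m + (k + 1) = m + 1 + k := by ring
      rw [pow_succ', Module.End.mul_apply, e, hc]
      refine ⟨((m + 1 + k).descFactorial k : ℕ) * d (d a ^ k) + ((m + 2 : ℕ) * d a * c + a * d c), ?_⟩
      have hdesc : (m + 1 + k).descFactorial (k + 1) = (m + 1) * (m + 1 + k).descFactorial k := by
        rw [Nat.descFactorial_succ]; congr 1; omega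
      rw [map_add, mul_assoc, hdn, hd, hpow, hd, hpow (m + 1), hdesc]
      push_cast
      ring
  let F : Z →L[ℂ] Z := ⟨d, hcont⟩
  have hF : ∀ n y, ‖(d ^ n) y‖ ≤ ‖F‖ ^ n * ‖y‖ := by
    intro n
    induction n with
    | zero => intro y; simp
    | succ n ih =>
      intro y
      rw [pow_succ', Module.End.mul_apply]
      calc _ = ‖F ((d ^ n) y)‖ := rfl
        _ ≤ ‖F‖ * ‖(d ^ n) y‖ := F.le_opNorm _
        _ ≤ ‖F‖ * (‖F‖ ^ n * ‖y‖) := by gcongr; exact ih y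
        _ = _ := by ring
  have hbound : ∀ n : ℕ, (n + 1).factorial * ‖φ (d a)‖ ^ (n + 1) ≤
      (‖F‖ * ‖a‖) ^ (n + 1) * ‖(1 : Z)‖ := by
    intro n
    obtain ⟨c, hc⟩ := key (n + 1) 0
    rw [zero_add, Nat.descFactorial_self] at hc
    have h1 := congrArg φ hc
    simp only [map_add, map_mul, map_pow, map_natCast, hφa] at h1
    simp only [pow_zero, mul_one, zero_add, pow_one, zero_mul, add_zero] at h1
    calc ((n + 1).factorial : ℝ) * ‖φ (d a)‖ ^ (n + 1)
        = ‖φ ((d ^ (n + 1)) (a ^ (n + 1)))‖ := by rw [h1]; simp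
      _ ≤ ‖(d ^ (n + 1)) (a ^ (n + 1))‖ * ‖(1 : Z)‖ := AlgHom.norm_apply_le_self_mul_norm_one φ _
      _ ≤ (‖F‖ ^ (n + 1) * ‖a ^ (n + 1)‖) * ‖(1 : Z)‖ := by gcongr; exact hF _ _
      _ ≤ (‖F‖ ^ (n + 1) * ‖a‖ ^ (n + 1)) * ‖(1 : Z)‖ := by gcongr; exact norm_pow_le' a (by omega)
      _ = _ := by ring
  by_contra hne
  have hpos : 0 < ‖φ (d a)‖ := norm_pos_iff.mpr hne
  have hlim := FloorSemiring.tendsto_pow_div_factorial_atTop (‖F‖ * ‖a‖ / ‖φ (d a)‖)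
  have hlim2 := ((tendsto_add_atTop_iff_nat 1).mpr hlim).mul_const ‖(1 : Z)‖
  rw [zero_mul] at hlim2
  have : (1 : ℝ) ≤ 0 := by
    refine ge_of_tendsto' hlim2 fun n => ?_
    have := hbound n
    have hfp : (0 : ℝ) < (n + 1).factorial := by positivity
    rw [div_pow, div_div, div_mul_eq_mul_div, le_div_iff₀ (by positivity), one_mul, mul_comm]
    exact this
  linarith

theorem exists_small_pow {Z : Type*} [NormedCommRing Z] [NormedAlgebra ℂ Z] [CompleteSpace Z]
    (z : Z) (hz : ∀ φ : Z →ₐ[ℂ] ℂ, φ z = 0) (K : ℝ) (hK : 0 < K) :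
    ∃ n : ℕ, 0 < n ∧ K ^ n * ‖z ^ n‖ < 1 := by
  have hr : spectralRadius ℂ z = 0 := by
    unfold spectralRadius
    simp only [ENNReal.iSup_eq_zero]
    intro k hk
    obtain ⟨f, hf⟩ := WeakDual.CharacterSpace.mem_spectrum_iff_exists.mp hk
    have := hz (WeakDual.CharacterSpace.toAlgHom f)
    have h0 : f z = 0 := this
    rw [← hf, h0]; simp
  have ht := spectrum.pow_nnnorm_pow_one_div_tendsto_nhds_spectralRadius z
  rw [hr] at ht
  have hε : (0 : ENNReal) < ENNReal.ofReal K⁻¹ := by simpa using hK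
  obtain ⟨n, hn, hn0⟩ := ((ht.eventually (gt_mem_nhds hε)).and (eventually_gt_atTop 0)).exists
  refine ⟨n, hn0, ?_⟩
  have hn0' : (n : ℝ) ≠ 0 := by positivity
  have h1 : (‖z ^ n‖₊ : ENNReal) < ENNReal.ofReal (K⁻¹ ^ n) := by
    have := ENNReal.rpow_lt_rpow hn (show (0 : ℝ) < n by positivity)
    rw [← ENNReal.rpow_mul, one_div, inv_mul_cancel₀ hn0', ENNReal.rpow_one,
      ENNReal.rpow_natCast, ← ENNReal.ofReal_pow (by positivity)] at this
    exact this
  have h2 : ‖z ^ n‖ < K⁻¹ ^ n := by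
    rw [← ENNReal.ofReal_lt_ofReal_iff (by positivity), ofReal_norm]
    exact h1
  rw [inv_pow] at h2
  calc K ^ n * ‖z ^ n‖ < K ^ n * (K ^ n)⁻¹ := by gcongr
    _ = 1 := mul_inv_cancel₀ (by positivity)

theorem jld_zero {A : Type*} [NormedRing A] [NormedAlgebra ℂ A] [CompleteSpace A]
    (hss : (⊥ : Ideal A).jacobson = ⊥)
    (d : A →ₗ[ℂ] A) (hd : ∀ x, d (x * x) = 2 * (x * d x)) (a : A) : d a = 0 := by
  have h2 : ∀ x y : A, 2 * x = 2 * y → x = y := by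
    intro x y hx
    have : (2 : ℂ) • x = (2 : ℂ) • y := by rw [two_smul, two_smul, ← two_mul, ← two_mul]; exact hx
    exact smul_right_injective A (two_ne_zero (α := ℂ)) this
  have hcen := jld_central hss d hd
  have hlin := jld_lin d.toAddMonoidHom hd
  simp only [LinearMap.toAddMonoidHom_coe] at hlin
  have hmemc : ∀ z : A, z ∈ Subalgebra.center ℂ A ↔ ∀ b, b * z = z * b := fun z =>
    Subalgebra.mem_center_iff
  let _ : NormedCommRing (Subalgebra.center ℂ A) :=
    { (inferInstance : NormedRing (Subalgebra.center ℂ A)) with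
      mul_comm := fun x y => Subtype.ext ((hmemc y.1).mp y.2 x.1) }
  let _ : NormedAlgebra ℂ (Subalgebra.center ℂ A) :=
    { (inferInstance : Algebra ℂ (Subalgebra.center ℂ A)) with
      norm_smul_le := fun c x => norm_smul_le c (x : A) }
  have hclosed : IsClosed ((Subalgebra.center ℂ A : Subalgebra ℂ A) : Set A) := by
    have : ((Subalgebra.center ℂ A : Subalgebra ℂ A) : Set A) = ⋂ b : A, {z | b * z = z * b} := by
      ext z
      rw [Set.mem_iInter]; exact hmemc z
    rw [this]
    exact isClosed_iInter fun b => isClosed_eq (by fun_prop) (by fun_prop)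
  have _ : CompleteSpace (Subalgebra.center ℂ A) := hclosed.completeSpace_coe
  have hssZ : ∀ z : Subalgebra.center ℂ A,
      (∀ φ : (Subalgebra.center ℂ A) →ₐ[ℂ] ℂ, φ z = 0) → z = 0 := by
    intro z hz
    apply Subtype.ext
    change (z : A) = 0
    rw [← Submodule.mem_bot A, ← hss, Ideal.mem_jacobson_iff]
    intro y
    obtain ⟨n, hn0, hn⟩ := exists_small_pow z hz (‖y‖ + 1) (by positivity)
    have hcz : Commute (-y) (z : A) := (hmemc z.1).mp z.2 (-y)
    have hpow : ‖(-y * (z : A)) ^ n‖ < 1 := by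
      rw [hcz.mul_pow]
      have e : ‖(z : A) ^ n‖ = ‖z ^ n‖ := rfl
      calc _ ≤ ‖(-y) ^ n‖ * ‖(z : A) ^ n‖ := norm_mul_le _ _
        _ ≤ ‖-y‖ ^ n * ‖(z : A) ^ n‖ := by gcongr; exact norm_pow_le' _ hn0
        _ ≤ (‖y‖ + 1) ^ n * ‖z ^ n‖ := by rw [norm_neg, e]; gcongr; linarith
        _ < 1 := hn
    have hu := isUnit_one_sub_of_norm_lt_one hpow
    have hg : (∑ i ∈ Finset.range n, (-y * (z : A)) ^ i) * (1 - (-y * (z : A))) =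
      1 - (-y * (z : A)) ^ n := geom_sum_mul_neg _ n
    obtain ⟨u, hu⟩ := hu
    refine ⟨↑u⁻¹ * ∑ i ∈ Finset.range n, (-y * (z : A)) ^ i, ?_⟩
    rw [Submodule.mem_bot, sub_eq_zero]
    generalize (∑ i ∈ Finset.range n, (-y * (z : A)) ^ i) = G at *
    have : ↑u⁻¹ * G * y * (z : A) + ↑u⁻¹ * G = ↑u⁻¹ * (G * (1 - (-y * (z : A)))) := by noncomm_ring
    rw [this, hg, ← hu]; simp
  let dZ : (Subalgebra.center ℂ A) →ₗ[ℂ] (Subalgebra.center ℂ A) :=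
    { toFun := fun z => ⟨d z, (hmemc _).mpr fun b => (hcen z b).symm⟩
      map_add' := fun x y => Subtype.ext (map_add d (x : A) y)
      map_smul' := fun c x => Subtype.ext (map_smul d c (x : A)) }
  have hdZ0 := der_zero hssZ dZ (by
    intro x y
    apply Subtype.ext
    change d ((x : A) * y) = x * d y + y * d x
    have h := hlin (x : A) y
    rw [(hmemc x.1).mp x.2 y, ← two_mul, two_mul, map_add, ← two_mul, ← mul_add] at h
    exact h2 _ _ h)
  have hdz : ∀ z ∈ Subalgebra.center ℂ A, d z = 0 := fun z hz =>
    congrArg Subtype.val (hdZ0 ⟨z, hz⟩)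
  have hmem : ∀ x, d x ∈ Subalgebra.center ℂ A := fun x => (hmemc _).mpr fun b => (hcen x b).symm
  have hsq : d a * d a = 0 := by
    have h := hlin a (d a)
    have e : a * d a + d a * a = d (a * a) := by rw [hcen a a, hd, two_mul]
    rw [e, hdz _ (hmem _), hdz _ (hmem _)] at h
    apply h2
    simpa using h.symm
  have := hssZ ⟨d a, hmem a⟩ (by
    intro φ
    have h0 : (⟨d a, hmem a⟩ : Subalgebra.center ℂ A) * ⟨d a, hmem a⟩ = 0 := Subtype.ext hsq
    have := congrArg φ h0
    rw [map_mul, map_zero] at this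
    exact mul_self_eq_zero.mp this)
  exact congrArg Subtype.val this


open MulOpposite

/-- On a complex unital semisimple Banach `*`-algebra, if `W` is a left separating point
and `δ(W) = A δ(B)* + B* δ(A)` whenever `A B* = W`, then `δ = 0`. -/
theorem stmt11 {A : Type*}
    [NormedRing A] [NormedAlgebra ℂ A] [CompleteSpace A] [StarRing A]
    (hss : (⊥ : Ideal A).jacobson = ⊥)
    (W : A) (hW : ∀ a : A, W * a = 0 → a = 0)
    (δ : A →ₗ[ℂ] A)
    (hδ : ∀ a b : A, a * star b = W → δ W = a * star (δ b) + star b * δ a) :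
    δ = 0 := by
  have hac : ∀ a c : A, a * c = W → δ W = a * star (δ (star c)) + c * δ a := by
    intro a c h
    simpa using hδ a (star c) (by simpa using h)
  have hδ1 : δ 1 = 0 := by
    have h := hac W 1 (mul_one W)
    rw [one_mul, star_one, right_eq_add] at h
    simpa using hW _ h
  let T : A →+ A :=
    { toFun := fun x => star (δ (star (x * W)))
      map_zero' := by simp
      map_add' := fun x y => by simp [add_mul] }
  have hT : ∀ x, T x = star (δ (star (x * W))) := fun _ => rfl
  have hT1 : T 1 = δ W := by
    have h := hac 1 W (one_mul W)
    rw [hδ1] at h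
    simpa [hT] using h.symm
  let d : A →ₗ[ℂ] A := (LinearMap.mulLeft ℂ W).comp δ
  have hdx : ∀ x, d x = W * δ x := fun _ => rfl
  have hd : ∀ x, d (x * x) = 2 * (x * d x) := by
    refine jordan_of_inv d.toAddMonoidHom T ?_
    intro x
    have h := hac (↑x⁻¹ : A) (x * W) (by simp)
    rw [← hT, ← hT1] at h
    have h' := congrArg (fun t => (↑x⁻¹ : A) * t) h
    simp only [mul_add, mul_assoc, Units.inv_mul_cancel_left] at h'
    change W * δ _ = _
    rw [h', mul_assoc]; abel
  ext a
  exact hW _ (jld_zero hss d hd a)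
end

section
/- Let M have the property 𝕄. If δ, τ : A → M are linear and δ(A)∘B + A∘τ(B) = 0 whenever A∘B = 0, then there exists a Jordan derivation Δ : A → M with δ(A) = Δ(A) + δ(I)A and τ(A) = Δ(A) + Aτ(I) for all A ∈ A. -/
open MulOpposite

namespace Aux17

section gen
variable {A B : Type*} [Ring A] [Ring B]

lemma idem12 {e : A} (he : e * e = e) (a : A) :
    (e + e * a * (1 - e)) * (e + e * a * (1 - e)) = e + e * a * (1 - e) := by
  have he' : ∀ x, e * (e * x) = e * x := fun x => by rw [← mul_assoc, he]
  simp only [mul_add, add_mul, mul_sub, sub_mul, mul_assoc, he, he', one_mul, mul_one]; abel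

lemma idem21 {e : A} (he : e * e = e) (a : A) :
    (e + (1 - e) * a * e) * (e + (1 - e) * a * e) = e + (1 - e) * a * e := by
  have he' : ∀ x, e * (e * x) = e * x := fun x => by rw [← mul_assoc, he]
  simp only [mul_add, add_mul, mul_sub, sub_mul, mul_assoc, he, he', one_mul, mul_one]; abel

lemma phi_idem (φ : A →+ A →+ B) (hφ : ∀ a b, a * b + b * a = 0 → φ a b = 0)
    {e : A} (he : e * e = e) (a : A) : φ a e + φ a e = φ (a * e + e * a) 1 := by
  have he' : ∀ x, e * (e * x) = e * x := fun x => by rw [← mul_assoc, he]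
  have h1 := hφ (e * a * e) (1 - e) (by
    simp only [mul_add, add_mul, mul_sub, sub_mul, mul_assoc, he, he', one_mul, mul_one]; abel)
  have h2 := hφ (a - e * a - a * e + e * a * e) e (by
    simp only [mul_add, add_mul, mul_sub, sub_mul, mul_assoc, he, he', one_mul, mul_one]; abel)
  have h3 := hφ (e * a + a * e - e * a * e - e * a * e) (e + e - 1) (by
    simp only [mul_add, add_mul, mul_sub, sub_mul, mul_assoc, he, he', one_mul, mul_one]; abel)
  simp only [map_add, map_sub, AddMonoidHom.add_apply, AddMonoidHom.sub_apply] at *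
  linear_combination (norm := abel) -h1 - h1 + h2 + h2 + h3

end gen

section part2
variable {A B : Type*} [Ring A] [Ring B]

def Good (σ : A →+ B) (x : A) : Prop := ∀ a, σ (a * x + x * a) = σ a * σ x + σ x * σ a

lemma Good.add {σ : A →+ B} {x y : A} (hx : Good σ x) (hy : Good σ y) : Good σ (x + y) := by
  intro a
  have h1 := hx a
  have h2 := hy a
  have : a * (x + y) + (x + y) * a = (a * x + x * a) + (a * y + y * a) := by noncomm_ring
  rw [this, map_add, h1, h2, map_add]; noncomm_ring

lemma Good.neg {σ : A →+ B} {x : A} (hx : Good σ x) : Good σ (-x) := by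
  intro a
  have h1 := hx a
  have : a * (-x) + (-x) * a = -(a * x + x * a) := by noncomm_ring
  rw [this, map_neg, h1, map_neg]; noncomm_ring

lemma Good.sub {σ : A →+ B} {x y : A} (hx : Good σ x) (hy : Good σ y) : Good σ (x - y) := by
  rw [sub_eq_add_neg]; exact hx.add hy.neg

lemma Good.half {σ : A →+ B} (h2 : ∀ z : B, z + z = 0 → z = 0) {x : A} (hx : Good σ (x + x)) :
    Good σ x := by
  intro a
  have h1 := hx a
  apply sub_eq_zero.1
  apply h2
  have : a * (x + x) + (x + x) * a = (a * x + x * a) + (a * x + x * a) := by noncomm_ring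
  rw [this, map_add, map_add σ x x] at h1
  linear_combination (norm := noncomm_ring) h1

variable (σ : A →+ B) (h2 : ∀ z : B, z + z = 0 → z = 0)
  (hσ : ∀ e, e * e = e → Good σ e)
include h2 hσ

lemma good12 {e : A} (he : e * e = e) (a : A) : Good σ (e * a * (1 - e)) := by
  have := (hσ _ (idem12 he a)).sub (hσ e he)
  simpa using this

lemma good21 {e : A} (he : e * e = e) (a : A) : Good σ ((1 - e) * a * e) := by
  have := (hσ _ (idem21 he a)).sub (hσ e he)
  simpa using this

lemma sig_sq {x : A} (hx : Good σ x) : σ (x * x) = σ x * σ x := by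
  apply sub_eq_zero.1
  apply h2
  have := hx x
  rw [map_add] at this
  linear_combination (norm := noncomm_ring) this

lemma sig_idem {e : A} (he : e * e = e) : σ e * σ e = σ e := by
  rw [← sig_sq σ h2 hσ (hσ e he), he]

/-- `k = [e,[e,a]]` -/
lemma good_k {e : A} (he : e * e = e) (a : A) : Good σ (e * a + a * e - e * a * e - e * a * e) := by
  have := (good12 σ h2 hσ he a).add (good21 σ h2 hσ he a)
  convert this using 1
  noncomm_ring

lemma good_comm {e : A} (he : e * e = e) (a : A) : Good σ (e * a - a * e) := by
  have := (good12 σ h2 hσ he a).sub (good21 σ h2 hσ he a)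
  convert this using 1
  noncomm_ring

lemma sig_k {e : A} (he : e * e = e) (a : A) :
    σ (e * a + a * e - e * a * e - e * a * e)
      = σ e * σ a + σ a * σ e - σ e * σ a * σ e - σ e * σ a * σ e := by
  have h1 := hσ e he a
  have h3 := hσ e he (a * e + e * a)
  rw [h1] at h3
  have he' : ∀ x, e * (e * x) = e * x := fun x => by rw [← mul_assoc, he]
  have hE := sig_idem σ h2 hσ he
  have hE' : ∀ x, σ e * (σ e * x) = σ e * x := fun x => by rw [← mul_assoc, hE]
  have : e * a + a * e - e * a * e - e * a * e
    = (a * e + e * a) + (a * e + e * a) - ((a * e + e * a) * e + e * (a * e + e * a)) := by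
    simp only [mul_add, add_mul, mul_assoc, he, he']; abel
  rw [this, map_sub, map_add, h3, h1]
  simp only [mul_add, add_mul, mul_assoc, hE, hE']; abel

lemma good_jmul {e : A} (he : e * e = e) {x : A} (hx : Good σ x) : Good σ (e * x + x * e) := by
  intro a
  have he' : ∀ x, e * (e * x) = e * x := fun x => by rw [← mul_assoc, he]
  have hE := sig_idem σ h2 hσ he
  have hE' : ∀ x, σ e * (σ e * x) = σ e * x := fun x => by rw [← mul_assoc, hE]
  have hk := good_k σ h2 hσ he a
  have sk := sig_k σ h2 hσ he a
  generalize hkk : e * a + a * e - e * a * e - e * a * e = k at hk sk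
  -- [e,k] = [e,a]
  have hek : e * k - k * e = e * a - a * e := by
    rw [← hkk]; simp only [mul_add, add_mul, mul_sub, sub_mul, mul_assoc, he, he']; abel
  have hEK : σ e * σ k - σ k * σ e = σ e * σ a - σ a * σ e := by
    rw [sk]; simp only [mul_add, add_mul, mul_sub, sub_mul, mul_assoc, hE, hE']; abel
  have key : a * (e * x + x * e) + (e * x + x * e) * a
      = ((a * x + x * a) * e + e * (a * x + x * a))
        - (((x * k + k * x) * e + e * (x * k + k * x))
          - ((x * e + e * x) * k + k * (x * e + e * x))) := by
    have : (((x * k + k * x) * e + e * (x * k + k * x))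
          - ((x * e + e * x) * k + k * (x * e + e * x)))
          = (e * k - k * e) * x - x * (e * k - k * e) := by noncomm_ring
    rw [this, hek]; noncomm_ring
  rw [key, map_sub, map_sub, hσ e he, hx a, hσ e he, hk x, hk, hσ e he x]
  have h4 : σ (e * x + x * e) = σ x * σ e + σ e * σ x := by
    rw [add_comm, hσ e he x]
  rw [h4]
  have : ((σ x * σ k + σ k * σ x) * σ e + σ e * (σ x * σ k + σ k * σ x)
          - ((σ x * σ e + σ e * σ x) * σ k + σ k * (σ x * σ e + σ e * σ x)))
          = (σ e * σ k - σ k * σ e) * σ x - σ x * (σ e * σ k - σ k * σ e) := by noncomm_ring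
  rw [this, hEK]; noncomm_ring

lemma good_lmul {e : A} (he : e * e = e) {x : A} (hx : Good σ x) : Good σ (e * x) := by
  apply Good.half h2
  have := (good_jmul σ h2 hσ he hx).add (good_comm σ h2 hσ he x)
  convert this using 1
  noncomm_ring

lemma comm_sig {e : A} (he : e * e = e) {b : A} (hb : e * b = b * e) :
    σ e * σ b = σ b * σ e := by
  have hE := sig_idem σ h2 hσ he
  have hE' : ∀ x, σ e * (σ e * x) = σ e * x := fun x => by rw [← mul_assoc, hE]
  have sk := sig_k σ h2 hσ he b
  have : e * b + b * e - e * b * e - e * b * e = 0 := by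
    rw [hb]; simp only [mul_assoc, he]; abel
  rw [this, map_zero] at sk
  have h3 := congrArg (fun z => σ e * z - z * σ e) sk
  simp only [mul_add, add_mul, mul_sub, sub_mul, mul_assoc, hE, hE', mul_zero, zero_mul] at h3
  linear_combination (norm := noncomm_ring) -h3

lemma comm_m {e : A} (he : e * e = e) (a : A) :
    σ e * (σ (a * a) - σ a * σ a) = (σ (a * a) - σ a * σ a) * σ e := by
  have he' : ∀ x, e * (e * x) = e * x := fun x => by rw [← mul_assoc, he]
  have hk := good_k σ h2 hσ he a
  generalize hkk : e * a + a * e - e * a * e - e * a * e = k at hk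
  obtain ⟨b, rfl⟩ : ∃ b, a = b + k := ⟨a - k, by abel⟩
  have hb : e * b = b * e := by
    have : b = (b + k) - (e * (b + k) + (b + k) * e - e * (b + k) * e - e * (b + k) * e) := by
      rw [hkk]; abel
    rw [this]
    generalize b + k = c
    simp only [mul_add, add_mul, mul_sub, sub_mul, mul_assoc, he, he']; abel
  have h1 : σ ((b + k) * (b + k)) - σ (b + k) * σ (b + k) = σ (b * b) - σ b * σ b := by
    have : (b + k) * (b + k) = b * b + (b * k + k * b) + k * k := by noncomm_ring
    rw [this, map_add, map_add, hk b, sig_sq σ h2 hσ hk, map_add]; noncomm_ring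
  rw [h1]
  have c1 := comm_sig σ h2 hσ he hb
  have c2 := comm_sig σ h2 hσ he (b := b * b) (by rw [← mul_assoc, hb, mul_assoc, hb, mul_assoc])
  rw [mul_sub, sub_mul, c2, ← mul_assoc, c1, mul_assoc, c1, mul_assoc]

lemma jm {x a : A} (hx : Good σ x) (hxx : Good σ (x * x)) (hax : Good σ (a * x + x * a))
    (hxax : Good σ (x * a * x)) :
    σ x * (σ x * (σ (a * a) - σ a * σ a) + (σ (a * a) - σ a * σ a) * σ x)
     + (σ x * (σ (a * a) - σ a * σ a) + (σ (a * a) - σ a * σ a) * σ x) * σ x = 0 := by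
  have sxx := sig_sq σ h2 hσ hx
  have h1 : σ (x * a * x) = σ x * σ a * σ x := by
    apply sub_eq_zero.1
    apply h2
    have e1 := hx (a * x + x * a)
    have e2 := hxx a
    rw [hx a] at e1
    rw [sxx] at e2
    have : (a * x + x * a) * x + x * (a * x + x * a) - (a * (x * x) + x * x * a)
      = x * a * x + x * a * x := by noncomm_ring
    have e3 := congrArg σ this
    rw [map_sub, map_add σ (x * a * x), e1, e2] at e3
    linear_combination (norm := noncomm_ring) -e3
  have h3 : σ (a * x * a) + σ (a * x * a) = σ a * (σ a * σ x + σ x * σ a)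
      + (σ a * σ x + σ x * σ a) * σ a - (σ (a * a) * σ x + σ x * σ (a * a)) := by
    rw [← hx (a * a), ← hx a, ← hax, ← map_add, ← map_sub]
    congr 1; noncomm_ring
  have h4 := hx (a * x * a)
  have h5 := hxax a
  have : a * x * a * x + x * (a * x * a) = a * (x * a * x) + x * a * x * a := by noncomm_ring
  rw [this, h5, h1] at h4
  have h6 := congrArg (fun z => z * σ x + σ x * z) h3
  linear_combination (norm := noncomm_ring) 2 * h4 + h6
end part2

section part1
variable {A B : Type*} [Ring A] [Ring B]
  (i : A →+* B) (δ τ : A →+ B) (h2 : ∀ z : B, z + z = 0 → z = 0)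
  (h : ∀ a b : A, a * b + b * a = 0 →
      (δ a * i b + i b * δ a) + (i a * τ b + τ b * i a) = 0)

def phi (i : A →+* B) (δ τ : A →+ B) : A →+ A →+ B :=
  AddMonoidHom.mk' (fun a => AddMonoidHom.mk'
    (fun b => (δ a * i b + i b * δ a) + (i a * τ b + τ b * i a))
      (by intro b b'; simp only [map_add]; noncomm_ring))
    (by
      intro a a'; ext b
      simp only [map_add, AddMonoidHom.mk'_apply, AddMonoidHom.add_apply]; noncomm_ring)

def P1 (i : A →+* B) (δ τ : A →+ B) (x : A) : Prop := ∀ a,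
  (δ a * i x + i x * δ a) + (i a * τ x + τ x * i a)
    + ((δ a * i x + i x * δ a) + (i a * τ x + τ x * i a))
    = δ (a * x + x * a) + δ (a * x + x * a)
      + ((i a * i x + i x * i a) * τ 1 + τ 1 * (i a * i x + i x * i a))

lemma P1.sub {i : A →+* B} {δ τ : A →+ B} {x y : A} (hx : P1 i δ τ x) (hy : P1 i δ τ y) :
    P1 i δ τ (x - y) := by
  intro a
  have e1 := hx a
  have e2 := hy a
  simp only [map_sub, map_add, mul_sub, sub_mul] at *
  linear_combination (norm := noncomm_ring) e1 - e2

include h in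
lemma P1_idem {e : A} (he : e * e = e) : P1 i δ τ e := by
  intro a
  have := phi_idem (phi i δ τ) h he a
  simp only [phi, AddMonoidHom.mk'_apply, AddMonoidHom.add_apply, map_one, mul_one, one_mul, map_add,
    map_mul] at this ⊢
  linear_combination (norm := noncomm_ring) this

include h in
lemma P1_12 {e : A} (he : e * e = e) (a : A) : P1 i δ τ (e * a * (1 - e)) := by
  have := (P1_idem i δ τ h (idem12 he a)).sub (P1_idem i δ τ h he)
  simpa using this

include h in
lemma P1_21 {e : A} (he : e * e = e) (a : A) : P1 i δ τ ((1 - e) * a * e) := by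
  have := (P1_idem i δ τ h (idem21 he a)).sub (P1_idem i δ τ h he)
  simpa using this

include h2

lemma tau_eq {x : A} (hx : P1 i δ τ x) :
    τ x + τ x = δ x + δ x + (i x * (τ 1 - δ 1) + (τ 1 - δ 1) * i x) := by
  have := hx 1
  simp only [map_one, mul_one, one_mul, map_add] at this
  apply sub_eq_zero.1
  apply h2
  linear_combination (norm := noncomm_ring) this

include h

lemma s_comm {e : A} (he : e * e = e) : i e * (δ 1 + τ 1) = (δ 1 + τ 1) * i e := by
  have hE : i e * i e = i e := by rw [← map_mul, he]
  have hE' : ∀ x, i e * (i e * x) = i e * x := fun x => by rw [← mul_assoc, hE]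
  have hp := P1_idem i δ τ h he
  have t := tau_eq i δ τ h2 hp
  have p := hp e
  rw [he, map_add] at p
  -- eliminate τ e
  have q : (δ e * i e + i e * δ e) * 4 + (i e * (i e * (τ 1 - δ 1) + (τ 1 - δ 1) * i e)
      + (i e * (τ 1 - δ 1) + (τ 1 - δ 1) * i e) * i e)
      = δ e * 4 + (i e * τ 1 + τ 1 * i e) * 2 := by
    have t' := congrArg (fun z => i e * z + z * i e) t
    rw [hE] at p
    linear_combination (norm := noncomm_ring) p - t'
  have q1 : i e * (δ 1 + τ 1) - i e * (δ 1 + τ 1) * i e = 0 := by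
    apply h2
    have := congrArg (fun z => i e * z - i e * z * i e) q
    have four : (4 : B) = 1 + 1 + 1 + 1 := by norm_num
    have two : (2 : B) = 1 + 1 := by norm_num
    simp only [four, two, mul_add, add_mul, mul_sub, sub_mul, mul_one, mul_assoc, hE, hE'] at this ⊢
    linear_combination (norm := abel) -this - this
  have q2 : (δ 1 + τ 1) * i e - i e * (δ 1 + τ 1) * i e = 0 := by
    apply h2
    have := congrArg (fun z => z * i e - i e * z * i e) q
    have four : (4 : B) = 1 + 1 + 1 + 1 := by norm_num
    have two : (2 : B) = 1 + 1 := by norm_num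
    simp only [four, two, mul_add, add_mul, mul_sub, sub_mul, mul_one, mul_assoc, hE, hE'] at this ⊢
    linear_combination (norm := abel) -this - this
  linear_combination (norm := noncomm_ring) q1 - q2

lemma t_comm_aux {e b : A} (he : e * e = e) (hb : P1 i δ τ b) (hbe : b * e + e * b = b) :
    (i b * i e - i e * i b) * (τ 1 - δ 1) = (τ 1 - δ 1) * (i b * i e - i e * i b) := by
  have hp := P1_idem i δ τ h he
  have t := tau_eq i δ τ h2 hp
  have t3 := tau_eq i δ τ h2 hb
  have p := hp b
  have p3 := hb e
  rw [hbe] at p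
  rw [add_comm (e * b), hbe] at p3
  have t' := congrArg (fun z => i b * z + z * i b) t
  have t3' := congrArg (fun z => i e * z + z * i e) t3
  apply sub_eq_zero.1
  linear_combination (norm := noncomm_ring) p - p3 - t' + t3'

lemma c_comm {e : A} (he : e * e = e) (a : A) :
    i (e * a - a * e) * δ 1 = δ 1 * i (e * a - a * e) := by
  have he' : ∀ x, e * (e * x) = e * x := fun x => by rw [← mul_assoc, he]
  -- s commutes
  have s1 := s_comm i δ τ h2 h he
  have s2 := s_comm i δ τ h2 h (idem12 he a)
  have s3 := s_comm i δ τ h2 h (idem21 he a)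
  have t2 := t_comm_aux i δ τ h2 h he (P1_12 i δ τ h he a) (by
    simp only [mul_add, add_mul, mul_sub, sub_mul, mul_assoc, he, he', one_mul, mul_one]; abel)
  have t3 := t_comm_aux i δ τ h2 h he (P1_21 i δ τ h he a) (by
    simp only [mul_add, add_mul, mul_sub, sub_mul, mul_assoc, he, he', one_mul, mul_one]; abel)
  have x2 : i (e * a * (1 - e)) * i e - i e * i (e * a * (1 - e)) = - i (e * a * (1 - e)) := by
    rw [← map_mul, ← map_mul, ← map_sub, ← map_neg]; congr 1
    simp only [mul_add, add_mul, mul_sub, sub_mul, mul_assoc, he, he', one_mul, mul_one]; abel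
  have x3 : i ((1 - e) * a * e) * i e - i e * i ((1 - e) * a * e) = i ((1 - e) * a * e) := by
    rw [← map_mul, ← map_mul, ← map_sub]; congr 1
    simp only [mul_add, add_mul, mul_sub, sub_mul, mul_assoc, he, he', one_mul, mul_one]; abel
  rw [x2] at t2
  rw [x3] at t3
  have hc : e * a - a * e = e * a * (1 - e) - (1 - e) * a * e := by noncomm_ring
  rw [hc, map_sub]
  rw [map_add] at s2 s3
  generalize i (e * a * (1 - e)) = u at *
  generalize i ((1 - e) * a * e) = v at *
  apply sub_eq_zero.1
  apply h2
  linear_combination (norm := noncomm_ring) s2 - s3 + t2 + t3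

/-- main output of part 1 for `Δ a = δ a - δ 1 * a`. -/
lemma part1_delta {e : A} (he : e * e = e) (a : A) :
    (δ (a * e + e * a) - δ 1 * i (a * e + e * a))
      = ((δ a - δ 1 * i a) * i e + i e * (δ a - δ 1 * i a))
        + (i a * (δ e - δ 1 * i e) + (δ e - δ 1 * i e) * i a) := by
  have hp := P1_idem i δ τ h he
  have t := tau_eq i δ τ h2 hp
  have s := s_comm i δ τ h2 h he
  have h' : ∀ a b : A, a * b + b * a = 0 →
      (τ a * i b + i b * τ a) + (i a * δ b + δ b * i a) = 0 := by
    intro a b hab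
    have := h b a (by rw [add_comm, hab])
    linear_combination (norm := noncomm_ring) this
  have c' := c_comm i τ δ h2 h' he a
  have p := hp a
  have t' := congrArg (fun z => i a * z + z * i a) t
  have s' := congrArg (fun z => i a * z) s
  have s'' := congrArg (fun z => z * i a) s
  simp only [map_add, map_sub, map_mul] at *
  apply sub_eq_zero.1
  apply h2
  linear_combination (norm := noncomm_ring) t' - p - s' + s'' - c'

lemma W_idem {e : A} (he : e * e = e) : τ e - i e * τ 1 = δ e - δ 1 * i e := by
  have hp := P1_idem i δ τ h he
  have t := tau_eq i δ τ h2 hp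
  have s := s_comm i δ τ h2 h he
  apply sub_eq_zero.1
  apply h2
  linear_combination (norm := noncomm_ring) t - s

lemma part1_tau {e : A} (he : e * e = e) (a : A) :
    (τ (a * e + e * a) - i (a * e + e * a) * τ 1)
      = ((τ a - i a * τ 1) * i e + i e * (τ a - i a * τ 1))
        + (i a * (τ e - i e * τ 1) + (τ e - i e * τ 1) * i a) := by
  have h' : ∀ a b : A, a * b + b * a = 0 →
      (τ a * i b + i b * τ a) + (i a * δ b + δ b * i a) = 0 := by
    intro a b hab
    have := h b a (by rw [add_comm, hab])
    linear_combination (norm := noncomm_ring) this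
  have hp := P1_idem i τ δ h' he
  have t := tau_eq i τ δ h2 hp
  have s := s_comm i δ τ h2 h he
  have c := c_comm i δ τ h2 h he a
  have c' := c_comm i τ δ h2 h' he a
  have p := hp a
  have t' := congrArg (fun z => i a * z + z * i a) t
  have s' := congrArg (fun z => i a * z) s
  have s'' := congrArg (fun z => z * i a) s
  simp only [map_add, map_sub, map_mul] at *
  apply sub_eq_zero.1
  apply h2
  linear_combination (norm := noncomm_ring) t' - p - s' + s'' - c
end part1

section final
variable {A : Type*} {M : Type*} [Ring A] [Algebra ℂ A]
    [AddCommGroup M] [Module ℂ M] [Module A M] [Module Aᵐᵒᵖ M]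
    [SMulCommClass A Aᵐᵒᵖ M]

lemma two_M (z : M) (hz : z + z = 0) : z = 0 := by
  have : (2 : ℂ) • z = 0 := by rw [two_smul, hz]
  simpa using this

lemma two_A (z : A) (hz : z + z = 0) : z = 0 := by
  have : (2 : ℂ) • z = 0 := by rw [two_smul, hz]
  simpa using this

lemma two_B (z : TrivSqZeroExt A M) (hz : z + z = 0) : z = 0 := by
  apply TrivSqZeroExt.ext
  · exact two_A _ (by simpa using congrArg TrivSqZeroExt.fst hz)
  · exact two_M _ (by simpa using congrArg TrivSqZeroExt.snd hz)

open TrivSqZeroExt in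
def sig (D : A →ₗ[ℂ] M) : A →+ TrivSqZeroExt A M :=
  AddMonoidHom.mk' (fun a => inl a + inr (D a)) (by
    intro a b; apply TrivSqZeroExt.ext <;> simp)

lemma sig_fst (D : A →ₗ[ℂ] M) (a : A) : (sig D a).fst = a := by simp [sig]
lemma sig_snd (D : A →ₗ[ℂ] M) (a : A) : (sig D a).snd = D a := by simp [sig]

lemma good_iff (D : A →ₗ[ℂ] M) (x : A) : Good (sig D) x ↔
    ∀ a, D (a * x + x * a) = (op x • D a + x • D a) + (a • D x + op a • D x) := by
  constructor
  · intro h a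
    have := congrArg TrivSqZeroExt.snd (h a)
    simp only [sig_snd, TrivSqZeroExt.snd_add, TrivSqZeroExt.snd_mul, sig_fst] at this
    rw [this]; abel
  · intro h a
    apply TrivSqZeroExt.ext
    · simp [sig_fst]
    · simp only [sig_snd, TrivSqZeroExt.snd_add, TrivSqZeroExt.snd_mul, sig_fst, h a]
      abel

variable [IsScalarTower ℂ A M] [IsScalarTower ℂ Aᵐᵒᵖ M]

omit [SMulCommClass A Aᵐᵒᵖ M] [IsScalarTower ℂ Aᵐᵒᵖ M] in
lemma smul_c1 (r : ℂ) (a : A) (m : M) : a • (r • m) = r • (a • m) := by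
  have h1 : ∀ n : M, r • n = (algebraMap ℂ A r) • n := fun n => by
    rw [algebraMap_smul]
  rw [h1, h1, smul_smul, smul_smul, Algebra.commutes]

omit [SMulCommClass A Aᵐᵒᵖ M] [IsScalarTower ℂ A M] in
lemma smul_c2 (r : ℂ) (a : A) (m : M) : op a • (r • m) = r • (op a • m) := by
  have h1 : ∀ n : M, r • n = (algebraMap ℂ Aᵐᵒᵖ r) • n := fun n => by
    rw [algebraMap_smul]
  rw [h1, h1, smul_smul, smul_smul, Algebra.commutes]

lemma good_adjoin (D : A →ₗ[ℂ] M) (hD : ∀ e : A, e * e = e → Good (sig D) e) (x : A)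
    (hx : x ∈ Algebra.adjoin ℂ {e : A | IsIdempotentElem e}) : Good (sig D) x := by
  rw [← Subalgebra.mem_toSubmodule, Algebra.adjoin_eq_span] at hx
  induction hx using Submodule.span_induction with
  | mem y hy =>
    induction hy using Submonoid.closure_induction_left with
    | one => exact hD 1 (one_mul 1)
    | mul_left e he y _ ih => exact good_lmul (sig D) two_B hD he ih
  | zero => exact hD 0 (mul_zero 0)
  | add x y _ _ h1 h2 => exact h1.add h2
  | smul r x _ h1 =>
    rw [good_iff] at h1 ⊢
    intro a
    rw [mul_smul_comm, smul_mul_assoc, ← smul_add, map_smul, h1 a, map_smul, smul_c1, smul_c2,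
      op_smul, smul_assoc, smul_assoc]
    simp only [smul_add]

lemma W_adjoin (D T : A →ₗ[ℂ] M) (hD : ∀ e : A, e * e = e → Good (sig D) e)
    (hT : ∀ e : A, e * e = e → Good (sig T) e) (hW : ∀ e : A, e * e = e → D e = T e) (x : A)
    (hx : x ∈ Algebra.adjoin ℂ {e : A | IsIdempotentElem e}) : D x = T x := by
  rw [← Subalgebra.mem_toSubmodule, Algebra.adjoin_eq_span] at hx
  induction hx using Submodule.span_induction with
  | mem y hy =>
    induction hy using Submonoid.closure_induction_left with
    | one => exact hW 1 (one_mul 1)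
    | mul_left e he y _ ih =>
      have he : e * e = e := he
      have g1 := (good_iff D e).1 (hD e he) y
      have g2 := (good_iff T e).1 (hT e he) y
      rw [ih, hW e he, ← g2] at g1
      have w12 := hW _ (idem12 he y)
      have w21 := hW _ (idem21 he y)
      rw [map_add, map_add, hW e he] at w12 w21
      have c : e * y + e * y = (y * e + e * y) + (e * y * (1 - e) - (1 - e) * y * e) := by
        noncomm_ring
      apply sub_eq_zero.1
      apply two_M
      have c1 := congrArg D c
      have c2 := congrArg T c
      rw [map_add, map_add, map_sub, g1, add_left_cancel w12, add_left_cancel w21] at c1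
      rw [map_add, map_add, map_sub] at c2
      rw [← c2] at c1
      rw [sub_add_sub_comm, c1, sub_self]
  | zero => simp
  | add x y _ _ h1 h2 => rw [map_add, map_add, h1, h2]
  | smul r x _ h1 => rw [map_smul, map_smul, h1]

end final

end Aux17

open Aux17 in
/-- Let `M` have property `𝕄`. If `δ(A)∘B + A∘τ(B) = 0` whenever `A∘B = 0`, then there
is a Jordan derivation `Δ` with `δ(A) = Δ(A) + δ(I)A` and `τ(A) = Δ(A) + A τ(I)`. -/
theorem stmt17 {A : Type*} {M : Type*}
    [Ring A] [Algebra ℂ A]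
    [AddCommGroup M] [Module ℂ M] [Module A M] [Module Aᵐᵒᵖ M]
    [SMulCommClass A Aᵐᵒᵖ M] [IsScalarTower ℂ A M] [IsScalarTower ℂ Aᵐᵒᵖ M]
    (J : Set A)
    (hJsub : ∀ x ∈ J, x ∈ Algebra.adjoin ℂ {e : A | IsIdempotentElem e})
    (hJadd : ∀ x ∈ J, ∀ y ∈ J, x + y ∈ J)
    (hJl : ∀ (a : A), ∀ x ∈ J, a * x ∈ J)
    (hJr : ∀ (a : A), ∀ x ∈ J, x * a ∈ J)
    (hM : ∀ m : M, (∀ x ∈ J, op x • (x • m) = 0) → m = 0)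
    (δ τ : A →ₗ[ℂ] M)
    (h : ∀ a b : A, a * b + b * a = 0 →
      (op b • δ a + b • δ a) + (a • τ b + op a • τ b) = 0) :
    ∃ Δ : A →ₗ[ℂ] M,
      (∀ a : A, Δ (a * a) = op a • Δ a + a • Δ a) ∧
      (∀ a : A, δ a = Δ a + op a • δ 1) ∧
      (∀ a : A, τ a = Δ a + a • τ 1) := by
  classical
  let i : A →+* TrivSqZeroExt A M := (TrivSqZeroExt.inlHom A M)
  let δ' : A →+ TrivSqZeroExt A M := (TrivSqZeroExt.inrHom A M).toAddMonoidHom.comp δ.toAddMonoidHom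
  let τ' : A →+ TrivSqZeroExt A M := (TrivSqZeroExt.inrHom A M).toAddMonoidHom.comp τ.toAddMonoidHom
  have hi : ∀ a, i a = TrivSqZeroExt.inl a := fun _ => rfl
  have hδ' : ∀ a, δ' a = TrivSqZeroExt.inr (δ a) := fun _ => rfl
  have hτ' : ∀ a, τ' a = TrivSqZeroExt.inr (τ a) := fun _ => rfl
  have hB : ∀ a b : A, a * b + b * a = 0 →
      (δ' a * i b + i b * δ' a) + (i a * τ' b + τ' b * i a) = 0 := by
    intro a b hab
    apply TrivSqZeroExt.ext
    · simp [hi, hδ', hτ']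
    · simpa [hi, hδ', hτ'] using h a b hab
  let D : A →ₗ[ℂ] M :=
    { toFun := fun a => δ a - op a • δ 1
      map_add' := fun a b => by rw [map_add, op_add, add_smul]; abel
      map_smul' := fun r a => by
        rw [map_smul, op_smul, smul_assoc, RingHom.id_apply, smul_sub] }
  let T : A →ₗ[ℂ] M :=
    { toFun := fun a => τ a - a • τ 1
      map_add' := fun a b => by rw [map_add, add_smul]; abel
      map_smul' := fun r a => by
        rw [map_smul, smul_assoc, RingHom.id_apply, smul_sub] }
  have hDa : ∀ a, D a = δ a - op a • δ 1 := fun _ => rfl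
  have hTa : ∀ a, T a = τ a - a • τ 1 := fun _ => rfl
  have hDe : ∀ e : A, e * e = e → Good (sig D) e := by
    intro e he
    rw [good_iff]
    intro a
    have := congrArg TrivSqZeroExt.snd (part1_delta i δ' τ' two_B hB he a)
    simpa only [hi, hδ', TrivSqZeroExt.snd_add, TrivSqZeroExt.snd_sub, TrivSqZeroExt.snd_mul,
      TrivSqZeroExt.fst_add, TrivSqZeroExt.fst_sub, TrivSqZeroExt.fst_mul, TrivSqZeroExt.snd_inl,
      TrivSqZeroExt.snd_inr, TrivSqZeroExt.fst_inl, TrivSqZeroExt.fst_inr, smul_zero, zero_smul,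
      op_zero, zero_mul, mul_zero, sub_zero, add_zero, zero_add, hDa] using this
  have hTe : ∀ e : A, e * e = e → Good (sig T) e := by
    intro e he
    rw [good_iff]
    intro a
    have := congrArg TrivSqZeroExt.snd (part1_tau i δ' τ' two_B hB he a)
    simpa only [hi, hτ', TrivSqZeroExt.snd_add, TrivSqZeroExt.snd_sub, TrivSqZeroExt.snd_mul,
      TrivSqZeroExt.fst_add, TrivSqZeroExt.fst_sub, TrivSqZeroExt.fst_mul, TrivSqZeroExt.snd_inl,
      TrivSqZeroExt.snd_inr, TrivSqZeroExt.fst_inl, TrivSqZeroExt.fst_inr, smul_zero, zero_smul,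
      op_zero, zero_mul, mul_zero, sub_zero, add_zero, zero_add, hTa] using this
  have hWe : ∀ e : A, e * e = e → D e = T e := by
    intro e he
    have := congrArg TrivSqZeroExt.snd (W_idem i δ' τ' two_B hB he)
    symm
    simpa only [hi, hδ', hτ', TrivSqZeroExt.snd_sub, TrivSqZeroExt.snd_mul,
      TrivSqZeroExt.snd_inl,
      TrivSqZeroExt.snd_inr, TrivSqZeroExt.fst_inl, TrivSqZeroExt.fst_inr, smul_zero, zero_smul,
      op_zero, sub_zero, add_zero, zero_add, hTa, hDa] using this
  have gD := good_adjoin D hDe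
  have gT := good_adjoin T hTe
  have gW := W_adjoin D T hDe hTe hWe
  have hW : ∀ a, D a = T a := by
    intro a
    apply sub_eq_zero.1
    have key : ∀ x ∈ J, op x • (D a - T a) + x • (D a - T a) = 0 := by
      intro x hx
      have g1 := (good_iff D x).1 (gD x (hJsub x hx)) a
      have g2 := (good_iff T x).1 (gT x (hJsub x hx)) a
      rw [gW _ (hJsub _ (hJadd _ (hJl a x hx) _ (hJr a x hx))), gW x (hJsub x hx), g2] at g1
      have := add_right_cancel g1
      rw [smul_sub, smul_sub, sub_add_sub_comm, ← this, sub_self]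
    apply hM
    intro x hx
    generalize D a - T a = m at key
    have k1 := key x hx
    have k2 := key (x * x) (hJl x x hx)
    rw [op_mul, mul_smul, mul_smul] at k2
    have k3 := congrArg (fun z => x • z) k1
    have k4 := congrArg (fun z => op x • z) k1
    simp only [smul_add, smul_zero] at k3 k4
    rw [smul_comm x (op x) m] at k3
    apply two_M
    have : op x • x • m + op x • x • m = (op x • x • m + x • x • m)
      + (op x • op x • m + op x • x • m) - (op x • op x • m + x • x • m) := by abel
    rw [this, k2, k3, k4]; simp
  refine ⟨D, ?_, fun a => by rw [hDa]; abel, fun a => by rw [hW a, hTa]; abel⟩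
  intro a
  apply sub_eq_zero.1
  have hm : (sig D (a * a) - sig D a * sig D a)
      = TrivSqZeroExt.inr (D (a * a) - (op a • D a + a • D a)) := by
    apply TrivSqZeroExt.ext
    · simp [sig_fst]
    · simp only [sig_snd, sig_fst, TrivSqZeroExt.snd_sub, TrivSqZeroExt.snd_mul,
        TrivSqZeroExt.snd_inr]
      abel
  have hce : ∀ e : A, e * e = e → e • (D (a * a) - (op a • D a + a • D a))
      = op e • (D (a * a) - (op a • D a + a • D a)) := by
    intro e he
    have := congrArg TrivSqZeroExt.snd (comm_m (sig D) two_B hDe he a)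
    rw [hm] at this
    simpa [sig_fst] using this
  have hJm : ∀ x ∈ J, x • (x • (D (a * a) - (op a • D a + a • D a))
        + op x • (D (a * a) - (op a • D a + a • D a)))
      + op x • (x • (D (a * a) - (op a • D a + a • D a))
        + op x • (D (a * a) - (op a • D a + a • D a))) = 0 := by
    intro x hx
    have := congrArg TrivSqZeroExt.snd (jm (sig D) two_B hDe (x := x) (a := a) (gD x (hJsub x hx))
      (gD _ (hJsub _ (hJl x x hx))) (gD _ (hJsub _ (hJadd _ (hJl a x hx) _ (hJr a x hx))))
      (gD _ (hJsub _ (hJl _ x hx))))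
    rw [hm] at this
    simpa only [sig_fst, TrivSqZeroExt.snd_add, TrivSqZeroExt.snd_mul, TrivSqZeroExt.fst_add,
      TrivSqZeroExt.fst_mul, TrivSqZeroExt.snd_inr, TrivSqZeroExt.fst_inr, smul_zero, zero_smul,
      op_zero, zero_mul, mul_zero, sub_zero, add_zero, zero_add, TrivSqZeroExt.snd_zero] using this
  generalize D (a * a) - (op a • D a + a • D a) = m at hce hJm
  have hc : ∀ x ∈ Algebra.adjoin ℂ {e : A | IsIdempotentElem e}, x • m = op x • m := by
    intro x hx
    induction hx using Algebra.adjoin_induction with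
    | mem e he => exact hce e he
    | algebraMap r =>
      rw [Algebra.algebraMap_eq_smul_one, op_smul, smul_assoc, smul_assoc, op_one, one_smul,
        one_smul]
    | add x y _ _ h1 h2 => rw [op_add, add_smul, add_smul, h1, h2]
    | mul x y _ _ h1 h2 =>
      rw [op_mul, mul_smul, mul_smul, h2, smul_comm, h1]
  apply hM
  intro x hx
  have k := hJm x hx
  have c := hc x (hJsub x hx)
  rw [← c, smul_add, smul_add, ← smul_comm x (op x) m, ← c] at k
  rw [← smul_comm x (op x) m, ← c]
  apply two_M
  apply two_M
  rw [← k]; try abel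
end
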